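/- Let d ≥ 1, h > 0 and m, H > 0, let x̂, ŷ ∈ ℝ^d, and let (X', Y') be given by the coupling construction from the points x̂, ŷ. Then 𝔼|X' − Y'| = |x̂ − ŷ|; that is, the coupling preserves the first moment of the distance. -/

import Mathlib

open scoped Classical
open MeasureTheory ProbabilityTheory Real

noncomputable section

/-- Standard Gaussian measure `N(0, I)` on `EuclideanSpace ℝ (Fin d)`
(the `d`-fold product of standard Gaussians `N(0,1)`). -/
def stdGaussian (d : ℕ) : Measure (EuclideanSpace ℝ (Fin d)) :=
  (Measure.pi fun _ : Fin d => gaussianReal 0 1).map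
    (MeasurableEquiv.toLp 2 (Fin d → ℝ))

/-- Gaussian measure `N(mean, v·I)` on `EuclideanSpace ℝ (Fin d)`: the product of
one-dimensional Gaussians with means `meanᵢ` and variance `v`. -/
def gaussianVec (d : ℕ) (mean : EuclideanSpace ℝ (Fin d)) (v : NNReal) :
    Measure (EuclideanSpace ℝ (Fin d)) :=
  (Measure.pi fun i : Fin d => gaussianReal (mean i) v).map
    (MeasurableEquiv.toLp 2 (Fin d → ℝ))

/-- The Gaussian density `φ_{z,hI}` on `ℝ^d`. -/
def gaussDensity (d : ℕ) (h : ℝ) (z u : EuclideanSpace ℝ (Fin d)) : ℝ :=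
  (2 * π * h) ^ (-(d : ℝ) / 2) * Real.exp (-‖u - z‖ ^ 2 / (2 * h))

/-- The truncated Gaussian density `φ^m_{z,hI}(u) = 1_{|u-z| ≤ m} φ_{z,hI}(u)`. -/
def gaussDensityTrunc (d : ℕ) (h m : ℝ) (z u : EuclideanSpace ℝ (Fin d)) : ℝ :=
  if ‖u - z‖ ≤ m then gaussDensity d h z u else 0

/-- Reflection `R_{x̂,ŷ} u = u - 2⟨e, u⟩e` with `e = (x̂ - ŷ)/‖x̂ - ŷ‖`
(the identity if `x̂ = ŷ`). -/
def reflect (d : ℕ) (xh yh : EuclideanSpace ℝ (Fin d)) (u : EuclideanSpace ℝ (Fin d)) :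
    EuclideanSpace ℝ (Fin d) :=
  if xh = yh then u else
    u - (2 * @inner ℝ _ _ ((‖xh - yh‖)⁻¹ • (xh - yh)) u) • ((‖xh - yh‖)⁻¹ • (xh - yh))

/-- Second component `Y'` of the truncated mirror coupling with parameters `m, H`,
as a function of the points `x̂, ŷ`, the Gaussian input `z` and the uniform input `t`.
The first component is `X' = x̂ + √h • z`. -/
def couplingY (d : ℕ) (h m H : ℝ) (xh yh : EuclideanSpace ℝ (Fin d))
    (z : EuclideanSpace ℝ (Fin d)) (t : ℝ) : EuclideanSpace ℝ (Fin d) :=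
  if ‖Real.sqrt h • z‖ < m ∧ ‖xh - yh‖ ≤ H then
    (if t ≤ min (gaussDensityTrunc d h m yh (xh + Real.sqrt h • z))
              (gaussDensityTrunc d h m xh (xh + Real.sqrt h • z))
            / gaussDensityTrunc d h m xh (xh + Real.sqrt h • z)
      then xh + Real.sqrt h • z
      else yh + Real.sqrt h • reflect d xh yh z)
  else yh + Real.sqrt h • z

end

/-!
Work in the coordinate `u = X'`, whose law has density `φ_x`. When the reflection is used,
`X' - Y' = mirrorDist x y u • e` with `e = (x - y)/‖x - y‖`, and the scalar `mirrorDist x y` has two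
symmetries: it is odd about the midpoint of `x` and `y`, and `mirrorDist x y - ‖x - y‖` is odd about
`x`. By the first its integral against the overlap `min φᵐ_y φᵐ_x` vanishes, by the second its
integral against `φᵐ_x` is `‖x - y‖ ∫ φᵐ_x`. Rejection occurs only where `φᵐ_y < φᵐ_x`, hence
closer to `x` than to `y`, where `mirrorDist` is nonnegative; therefore
`∫ |mirrorDist x y| (φᵐ_x - min φᵐ_y φᵐ_x) = ‖x - y‖ ∫ φᵐ_x`. The Gaussian mass outside the ball
moves synchronously at distance `‖x - y‖` and accounts for the rest; the sphere `‖u - x‖ = m`,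
where the construction and the truncation disagree, is a null set.
-/

section WithDensity

lemma map_withDensity_comp_of_measurePreserving {X Y : Type*} [MeasurableSpace X]
    [MeasurableSpace Y] {μ : Measure X} {ν : Measure Y} {e : X → Y} (he : MeasurePreserving e μ ν)
    {f : Y → ENNReal} (hf : Measurable f) :
    (μ.withDensity (f ∘ e)).map e = ν.withDensity f := by
  ext s hs
  rw [Measure.map_apply he.measurable hs, withDensity_apply _ (he.measurable hs),
    withDensity_apply _ hs]
  exact he.setLIntegral_comp_preimage hs hf

variable {ι : Type*} [Fintype ι] {X : ι → Type*} [∀ i, MeasurableSpace (X i)]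

lemma pi_withDensity_ofReal (μ : ∀ i, Measure (X i)) [∀ i, SigmaFinite (μ i)]
    {f : ∀ i, X i → ℝ} (hf_int : ∀ i, Integrable (f i) (μ i)) (hf_nonneg : ∀ i x, 0 ≤ f i x) :
    Measure.pi (fun i => (μ i).withDensity fun x => ENNReal.ofReal (f i x)) =
      (Measure.pi μ).withDensity fun x => ENNReal.ofReal (∏ i, f i (x i)) := by
  have : ∀ i, SigmaFinite ((μ i).withDensity fun x => ENNReal.ofReal (f i x)) := fun i =>
    SigmaFinite.withDensity_ofReal _
  refine Measure.pi_eq fun s hs => ?_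
  have hprod_int : Integrable (fun x => ∏ i, f i (x i))
      (Measure.pi fun i => (μ i).restrict (s i)) :=
    Integrable.fintype_prod_dep fun i => (hf_int i).restrict
  rw [withDensity_apply _ (MeasurableSet.univ_pi hs), Measure.restrict_pi_pi,
    ← ofReal_integral_eq_lintegral_ofReal hprod_int
      (ae_of_all _ fun x => Finset.prod_nonneg fun i _ => hf_nonneg i (x i)),
    integral_fintype_prod_eq_prod,
    ENNReal.ofReal_prod_of_nonneg fun i _ => integral_nonneg (hf_nonneg i)]
  refine Finset.prod_congr rfl fun i _ => ?_
  rw [withDensity_apply _ (hs i), ofReal_integral_eq_lintegral_ofReal (hf_int i).restrict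
    (ae_of_all _ (hf_nonneg i))]

end WithDensity

section Reflection

variable {G F : Type*} [AddGroup G] [MeasurableSpace G] [MeasurableAdd G] [MeasurableNeg G]
  [NormedAddCommGroup F] [NormedSpace ℝ F]

lemma integral_eq_zero_of_sub_left_eq_neg {μ : Measure G} [μ.IsAddLeftInvariant]
    [μ.IsNegInvariant] {f : G → F} (c : G) (hf : ∀ u, f (c - u) = -f u) : ∫ u, f u ∂μ = 0 := by
  have : IsAddTorsionFree F := .of_isTorsionFree ℝ F
  rw [← self_eq_neg, ← integral_neg, ← integral_sub_left_eq_self f μ c]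
  exact integral_congr_ae (ae_of_all _ hf)

end Reflection

section MirrorDist

variable {E : Type*} [NormedAddCommGroup E]

/-- The signed length, along `e = (x - y)/‖x - y‖`, of the displacement from `y + R_{x,y}(u - x)`
to `u`, where `R_{x,y}` is the reflection in the hyperplane orthogonal to `e`. In an inner product
space it equals `⟪e, 2u - x - y⟫`; the quotient below makes its sign and its symmetries visible, and
is `0` for `x = y`. -/
noncomputable def mirrorDist (x y u : E) : ℝ :=
  (‖u - y‖ ^ 2 - ‖u - x‖ ^ 2) / ‖x - y‖

lemma mirrorDist_nonneg {x y u : E} (hu : ‖u - x‖ ≤ ‖u - y‖) : 0 ≤ mirrorDist x y u := by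
  unfold mirrorDist
  have : ‖u - x‖ ^ 2 ≤ ‖u - y‖ ^ 2 := by gcongr
  exact div_nonneg (sub_nonneg.2 this) (norm_nonneg _)

lemma mirrorDist_swap (x y u : E) : mirrorDist y x u = -mirrorDist x y u := by
  rw [mirrorDist, mirrorDist, norm_sub_rev y x, ← neg_div, neg_sub]

lemma mirrorDist_add_sub (x y u : E) : mirrorDist x y (x + y - u) = -mirrorDist x y u := by
  rw [← mirrorDist_swap, mirrorDist, mirrorDist, norm_sub_rev y x, norm_sub_rev u y,
    norm_sub_rev u x]
  congr 4 <;> abel_nf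

lemma abs_mirrorDist_le (x y u : E) : |mirrorDist x y u| ≤ ‖x - y‖ + 2 * ‖u - x‖ := by
  have hdiff : |‖u - y‖ - ‖u - x‖| ≤ ‖x - y‖ := by
    simpa using abs_norm_sub_norm_le (u - y) (u - x)
  have hsum : ‖u - y‖ ≤ ‖u - x‖ + ‖x - y‖ := norm_sub_le_norm_sub_add_norm_sub u x y
  rw [mirrorDist, abs_div, abs_norm]
  refine div_le_of_le_mul₀ (norm_nonneg _) (by positivity) ?_
  rw [sq_sub_sq, abs_mul, abs_of_nonneg (by positivity)]
  exact mul_le_mul (by linarith) hdiff (abs_nonneg _) (by positivity)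

lemma continuous_mirrorDist (x y : E) : Continuous (mirrorDist x y) := by
  unfold mirrorDist
  fun_prop

variable [InnerProductSpace ℝ E]

lemma mirrorDist_two_smul_sub (x y u : E) :
    mirrorDist x y ((2 : ℝ) • x - u) = 2 * ‖x - y‖ - mirrorDist x y u := by
  have hx : ‖(2 : ℝ) • x - u - x‖ = ‖u - x‖ := by
    rw [norm_sub_rev u x]
    congr 1
    module
  have hy : ‖(2 : ℝ) • x - u - y‖ = ‖u - x - (x - y)‖ := by
    rw [norm_sub_rev (u - x)]
    congr 1
    module
  have hparallelogram := parallelogram_law_with_norm ℝ (u - x) (x - y)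
  rw [sub_add_sub_cancel] at hparallelogram
  have hsq : ‖u - x - (x - y)‖ ^ 2 - ‖u - x‖ ^ 2 =
      2 * (‖x - y‖ * ‖x - y‖) - (‖u - y‖ ^ 2 - ‖u - x‖ ^ 2) := by
    linear_combination hparallelogram
  rw [mirrorDist, mirrorDist, hx, hy, hsq, sub_div, mul_div_assoc, mul_self_div_self]

lemma mirrorDist_add_left (x y w : E) :
    mirrorDist x y (x + w) = ‖x - y‖ + 2 * inner ℝ (‖x - y‖⁻¹ • (x - y)) w := by
  have hsq : ‖x + w - y‖ ^ 2 - ‖x + w - x‖ ^ 2 =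
      ‖x - y‖ * ‖x - y‖ + 2 * inner ℝ (x - y) w := by
    rw [add_sub_right_comm, norm_add_sq_real, add_sub_cancel_left]
    ring
  rw [mirrorDist, hsq, add_div, mul_self_div_self, real_inner_smul_left]
  ring

end MirrorDist

section RadialDensity

/-- `p` is a nonincreasing function of the norm, as are centred Gaussian densities and their
truncations to balls; in particular it is even. -/
def RadiallyAntitone {E : Type*} [Norm E] (p : E → ℝ) : Prop :=
  ∀ ⦃v w : E⦄, ‖v‖ ≤ ‖w‖ → p w ≤ p v

variable {E : Type*} [NormedAddCommGroup E] {p : E → ℝ}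

lemma RadiallyAntitone.apply_neg (hp : RadiallyAntitone p) (w : E) : p (-w) = p w :=
  le_antisymm (hp (norm_neg w).ge) (hp (norm_neg w).le)

lemma RadiallyAntitone.abs_mirrorDist_mul_sub_min (hp : RadiallyAntitone p) (x y u : E) :
    |mirrorDist x y u| * (p (u - x) - min (p (u - y)) (p (u - x))) =
      mirrorDist x y u * (p (u - x) - min (p (u - y)) (p (u - x))) := by
  rcases le_total ‖u - x‖ ‖u - y‖ with hxy | hyx
  · rw [abs_of_nonneg (mirrorDist_nonneg hxy)]
  · rw [min_eq_right (hp hyx), sub_self, mul_zero, mul_zero]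

variable [MeasurableSpace E] [BorelSpace E] {μ : Measure E} [μ.IsAddLeftInvariant]

lemma integrable_mirrorDist_mul_sub_left (hp_int : Integrable p μ)
    (hp_moment : Integrable (fun w => ‖w‖ * p w) μ) (x y : E) :
    Integrable (fun u => mirrorDist x y u * p (u - x)) μ := by
  have hbound : Integrable (fun u => ‖x - y‖ * ‖p (u - x)‖ + 2 * ‖‖u - x‖ * p (u - x)‖) μ :=
    ((hp_int.comp_sub_right x).norm.const_mul _).add
      ((hp_moment.comp_sub_right x).norm.const_mul _)
  refine hbound.mono' ((continuous_mirrorDist x y).aestronglyMeasurable.mul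
    (hp_int.comp_sub_right x).aestronglyMeasurable) (ae_of_all _ fun u => ?_)
  calc ‖mirrorDist x y u * p (u - x)‖
      = |mirrorDist x y u| * ‖p (u - x)‖ := norm_mul _ _
    _ ≤ (‖x - y‖ + 2 * ‖u - x‖) * ‖p (u - x)‖ := by gcongr; exact abs_mirrorDist_le x y u
    _ = ‖x - y‖ * ‖p (u - x)‖ + 2 * ‖‖u - x‖ * p (u - x)‖ := by
      rw [norm_mul, norm_norm]
      ring

lemma integrable_mirrorDist_mul_sub_right (hp_int : Integrable p μ)
    (hp_moment : Integrable (fun w => ‖w‖ * p w) μ) (x y : E) :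
    Integrable (fun u => mirrorDist x y u * p (u - y)) μ := by
  simpa only [mirrorDist_swap y x, neg_mul] using
    (integrable_mirrorDist_mul_sub_left hp_int hp_moment y x).fun_neg

lemma integrable_mirrorDist_mul_min (hp_int : Integrable p μ)
    (hp_moment : Integrable (fun w => ‖w‖ * p w) μ) (x y : E) :
    Integrable (fun u => mirrorDist x y u * min (p (u - y)) (p (u - x))) μ := by
  refine ((integrable_mirrorDist_mul_sub_right hp_int hp_moment x y).norm.add
    (integrable_mirrorDist_mul_sub_left hp_int hp_moment x y).norm).mono'
    ((continuous_mirrorDist x y).aestronglyMeasurable.mul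
      ((hp_int.comp_sub_right y).inf (hp_int.comp_sub_right x)).aestronglyMeasurable)
    (ae_of_all _ fun u => ?_)
  rcases min_choice (p (u - y)) (p (u - x)) with h | h
  · rw [h]
    exact le_add_of_nonneg_right (norm_nonneg _)
  · rw [h]
    exact le_add_of_nonneg_left (norm_nonneg _)

lemma RadiallyAntitone.integrable_abs_mirrorDist_mul_sub_min (hp : RadiallyAntitone p)
    (hp_int : Integrable p μ) (hp_moment : Integrable (fun w => ‖w‖ * p w) μ) (x y : E) :
    Integrable (fun u => |mirrorDist x y u| * (p (u - x) - min (p (u - y)) (p (u - x)))) μ := by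
  simp only [hp.abs_mirrorDist_mul_sub_min, mul_sub]
  exact (integrable_mirrorDist_mul_sub_left hp_int hp_moment x y).sub
    (integrable_mirrorDist_mul_min hp_int hp_moment x y)

variable [μ.IsNegInvariant]

lemma integral_mirrorDist_mul_min_eq_zero (hp_even : ∀ w, p (-w) = p w) (x y : E) :
    ∫ u, mirrorDist x y u * min (p (u - y)) (p (u - x)) ∂μ = 0 := by
  refine integral_eq_zero_of_sub_left_eq_neg (x + y) fun u => ?_
  have hx : x + y - u - x = -(u - y) := by abel
  have hy : x + y - u - y = -(u - x) := by abel
  rw [hx, hy, hp_even, hp_even, min_comm, mirrorDist_add_sub, neg_mul]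

variable [InnerProductSpace ℝ E]

lemma integral_mirrorDist_mul_sub_left (hp_even : ∀ w, p (-w) = p w) (hp_int : Integrable p μ)
    (hp_moment : Integrable (fun w => ‖w‖ * p w) μ) (x y : E) :
    ∫ u, mirrorDist x y u * p (u - x) ∂μ = ‖x - y‖ * ∫ w, p w ∂μ := by
  have hodd : ∫ u, (mirrorDist x y u * p (u - x) - ‖x - y‖ * p (u - x)) ∂μ = 0 := by
    refine integral_eq_zero_of_sub_left_eq_neg ((2 : ℝ) • x) fun u => ?_
    have hx : (2 : ℝ) • x - u - x = -(u - x) := by module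
    rw [mirrorDist_two_smul_sub, hx, hp_even]
    ring
  rw [integral_sub (integrable_mirrorDist_mul_sub_left hp_int hp_moment x y)
    ((hp_int.comp_sub_right x).const_mul _), integral_const_mul,
    integral_sub_right_eq_self p x] at hodd
  exact sub_eq_zero.1 hodd

theorem RadiallyAntitone.integral_abs_mirrorDist_mul_sub_min (hp : RadiallyAntitone p)
    (hp_int : Integrable p μ) (hp_moment : Integrable (fun w => ‖w‖ * p w) μ) (x y : E) :
    ∫ u, |mirrorDist x y u| * (p (u - x) - min (p (u - y)) (p (u - x))) ∂μ =
      ‖x - y‖ * ∫ w, p w ∂μ := by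
  simp only [hp.abs_mirrorDist_mul_sub_min, mul_sub]
  rw [integral_sub (integrable_mirrorDist_mul_sub_left hp_int hp_moment x y)
    (integrable_mirrorDist_mul_min hp_int hp_moment x y),
    integral_mirrorDist_mul_sub_left hp.apply_neg hp_int hp_moment,
    integral_mirrorDist_mul_min_eq_zero hp.apply_neg, sub_zero]

end RadialDensity

section GaussianDensity

open scoped NNReal

variable {d : ℕ}

instance isProbabilityMeasure_gaussianVec (x : EuclideanSpace ℝ (Fin d)) (v : ℝ≥0) :
    IsProbabilityMeasure (gaussianVec d x v) := by
  unfold gaussianVec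
  exact Measure.isProbabilityMeasure_map (by fun_prop)

lemma gaussianReal_map_add_sqrt_mul (x : ℝ) (v : ℝ≥0) :
    (gaussianReal 0 1).map (fun t => x + √(v : ℝ) * t) = gaussianReal x v := by
  have hlaw := gaussianReal_const_add (gaussianReal_const_mul
    (HasLaw.id (μ := gaussianReal 0 1)) √(v : ℝ)) x
  have hvar : NNReal.mk (√(v : ℝ) ^ 2) (sq_nonneg _) * 1 = v := by
    ext
    simp
  rw [mul_zero, zero_add, hvar] at hlaw
  exact hlaw.map_eq

lemma stdGaussian_map_add_sqrt_smul (x : EuclideanSpace ℝ (Fin d)) (v : ℝ≥0) :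
    (stdGaussian d).map (fun z => x + √(v : ℝ) • z) = gaussianVec d x v := by
  have hcoord : (fun i => gaussianReal (x i) v) =
      fun i => (gaussianReal 0 1).map fun t => x i + √(v : ℝ) * t :=
    funext fun i => (gaussianReal_map_add_sqrt_mul (x i) v).symm
  rw [_root_.stdGaussian, gaussianVec, hcoord, ← Measure.pi_map_pi fun i => by fun_prop,
    Measure.map_map (by fun_prop) (by fun_prop), Measure.map_map (by fun_prop) (by fun_prop)]
  rfl

lemma continuous_gaussDensity (h : ℝ) (x : EuclideanSpace ℝ (Fin d)) :
    Continuous (gaussDensity d h x) := by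
  unfold gaussDensity
  fun_prop

lemma gaussDensity_pos {h : ℝ} (hh : 0 < h) (x u : EuclideanSpace ℝ (Fin d)) :
    0 < gaussDensity d h x u := by
  unfold gaussDensity
  positivity

lemma prod_gaussianPDFReal (x u : EuclideanSpace ℝ (Fin d)) (v : ℝ≥0) :
    ∏ i, gaussianPDFReal (x i) v (u i) = gaussDensity d v x u := by
  have hconst : (√(2 * π * v))⁻¹ ^ d = (2 * π * v) ^ (-(d : ℝ) / 2) := by
    rw [Real.sqrt_eq_rpow, ← Real.rpow_neg (by positivity), ← Real.rpow_mul_natCast (by positivity)]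
    ring_nf
  simp only [gaussianPDFReal, gaussDensity, Finset.prod_mul_distrib, Finset.prod_const,
    Finset.card_univ, Fintype.card_fin, hconst, ← Real.exp_sum, ← Finset.sum_div,
    Finset.sum_neg_distrib, EuclideanSpace.real_norm_sq_eq, PiLp.sub_apply]

lemma gaussianVec_eq_withDensity (x : EuclideanSpace ℝ (Fin d)) {v : ℝ≥0} (hv : v ≠ 0) :
    gaussianVec d x v = volume.withDensity fun u => ENNReal.ofReal (gaussDensity d v x u) := by
  rw [gaussianVec, ← map_withDensity_comp_of_measurePreserving
    (PiLp.volume_preserving_toLp (Fin d))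
    (continuous_gaussDensity _ x).measurable.ennreal_ofReal]
  simp only [gaussianReal_of_var_ne_zero _ hv, gaussianPDF_def]
  rw [pi_withDensity_ofReal _ (fun i => integrable_gaussianPDFReal (x i) v)
    (fun i => gaussianPDFReal_nonneg (x i) v), ← volume_pi]
  congr! with u
  exact congrArg ENNReal.ofReal (prod_gaussianPDFReal x (WithLp.toLp 2 u) v)

lemma integral_gaussianVec (x : EuclideanSpace ℝ (Fin d)) {v : ℝ≥0} (hv : v ≠ 0)
    (f : EuclideanSpace ℝ (Fin d) → ℝ) :
    ∫ u, f u ∂gaussianVec d x v = ∫ u, gaussDensity d v x u * f u := by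
  rw [gaussianVec_eq_withDensity x hv, integral_withDensity_eq_integral_toReal_smul
    (continuous_gaussDensity _ x).measurable.ennreal_ofReal
    (ae_of_all _ fun _ => ENNReal.ofReal_lt_top)]
  simp only [smul_eq_mul,
    ENNReal.toReal_ofReal (gaussDensity_pos (NNReal.coe_pos.2 hv.bot_lt) x _).le]

lemma integral_gaussDensity (x : EuclideanSpace ℝ (Fin d)) {v : ℝ≥0} (hv : v ≠ 0) :
    ∫ u, gaussDensity d v x u = 1 := by
  simpa using (integral_gaussianVec x hv fun _ => 1).symm

lemma integrable_gaussDensity (x : EuclideanSpace ℝ (Fin d)) {v : ℝ≥0} (hv : v ≠ 0) :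
    Integrable (gaussDensity d v x) :=
  .of_integral_ne_zero (by simp [integral_gaussDensity x hv])

end GaussianDensity

section TruncatedGaussianDensity

open scoped NNReal

variable {d : ℕ} {h m : ℝ}

lemma gaussDensityTrunc_eq_zero_sub (h m : ℝ) (z u : EuclideanSpace ℝ (Fin d)) :
    gaussDensityTrunc d h m z u = gaussDensityTrunc d h m 0 (u - z) := by
  simp only [gaussDensityTrunc, gaussDensity, sub_zero]

lemma gaussDensityTrunc_eq_indicator (h m : ℝ) (z : EuclideanSpace ℝ (Fin d)) :
    gaussDensityTrunc d h m z = (Metric.closedBall z m).indicator (gaussDensity d h z) := by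
  ext u
  simp only [gaussDensityTrunc, Set.indicator_apply, mem_closedBall_iff_norm]

lemma gaussDensityTrunc_nonneg (hh : 0 < h) (m : ℝ) (z u : EuclideanSpace ℝ (Fin d)) :
    0 ≤ gaussDensityTrunc d h m z u := by
  rw [gaussDensityTrunc_eq_indicator]
  exact Set.indicator_nonneg (fun v _ => (gaussDensity_pos hh z v).le) u

lemma measurable_gaussDensityTrunc (h m : ℝ) (z : EuclideanSpace ℝ (Fin d)) :
    Measurable (gaussDensityTrunc d h m z) := by
  rw [gaussDensityTrunc_eq_indicator]
  exact (continuous_gaussDensity h z).measurable.indicator measurableSet_closedBall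

lemma radiallyAntitone_gaussDensityTrunc (hh : 0 < h) (m : ℝ) :
    RadiallyAntitone (gaussDensityTrunc d h m 0) := by
  intro v w hvw
  by_cases hw : ‖w‖ ≤ m
  · rw [gaussDensityTrunc, gaussDensityTrunc, sub_zero, sub_zero, if_pos hw,
      if_pos (hvw.trans hw), gaussDensity, gaussDensity, sub_zero, sub_zero]
    gcongr
  · rw [gaussDensityTrunc, sub_zero, if_neg hw]
    exact gaussDensityTrunc_nonneg hh m 0 v

lemma integrable_gaussDensityTrunc (z : EuclideanSpace ℝ (Fin d)) {v : ℝ≥0} (hv : v ≠ 0) (m : ℝ) :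
    Integrable (gaussDensityTrunc d v m z) := by
  rw [gaussDensityTrunc_eq_indicator]
  exact (integrable_gaussDensity z hv).indicator measurableSet_closedBall

lemma integrable_norm_mul_gaussDensityTrunc {v : ℝ≥0} (hv : v ≠ 0) (m : ℝ) :
    Integrable fun w => ‖w‖ * gaussDensityTrunc d v m 0 w := by
  have hint := integrable_gaussDensityTrunc (d := d) 0 hv m
  refine (hint.norm.const_mul m).mono' (continuous_norm.aestronglyMeasurable.mul hint.1)
    (ae_of_all _ fun w => ?_)
  rw [norm_mul, norm_norm]
  by_cases hw : ‖w‖ ≤ m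
  · gcongr
  · simp [gaussDensityTrunc, hw]

lemma integrable_abs_mirrorDist_mul_gaussDensityTrunc (x y : EuclideanSpace ℝ (Fin d)) {v : ℝ≥0}
    (hv : v ≠ 0) (m : ℝ) :
    Integrable fun u => |mirrorDist x y u| * (gaussDensityTrunc d v m x u -
      min (gaussDensityTrunc d v m y u) (gaussDensityTrunc d v m x u)) := by
  simp only [gaussDensityTrunc_eq_zero_sub _ _ x, gaussDensityTrunc_eq_zero_sub _ _ y]
  have hp := radiallyAntitone_gaussDensityTrunc (d := d) (NNReal.coe_pos.2 hv.bot_lt) m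
  exact hp.integrable_abs_mirrorDist_mul_sub_min
    (integrable_gaussDensityTrunc 0 hv m) (integrable_norm_mul_gaussDensityTrunc hv m) x y

lemma integral_abs_mirrorDist_mul_gaussDensityTrunc (x y : EuclideanSpace ℝ (Fin d)) {v : ℝ≥0}
    (hv : v ≠ 0) (m : ℝ) :
    ∫ u, |mirrorDist x y u| * (gaussDensityTrunc d v m x u -
        min (gaussDensityTrunc d v m y u) (gaussDensityTrunc d v m x u)) =
      ‖x - y‖ * ∫ u, gaussDensityTrunc d v m x u := by
  simp only [gaussDensityTrunc_eq_zero_sub _ _ x, gaussDensityTrunc_eq_zero_sub _ _ y]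
  rw [integral_sub_right_eq_self]
  have hp := radiallyAntitone_gaussDensityTrunc (d := d) (NNReal.coe_pos.2 hv.bot_lt) m
  exact hp.integral_abs_mirrorDist_mul_sub_min
    (integrable_gaussDensityTrunc 0 hv m) (integrable_norm_mul_gaussDensityTrunc hv m) x y

end TruncatedGaussianDensity

section CouplingDistance

open scoped NNReal

variable {d : ℕ} {h m H : ℝ} {x y : EuclideanSpace ℝ (Fin d)}

lemma reflect_smul (x y : EuclideanSpace ℝ (Fin d)) (c : ℝ) (w : EuclideanSpace ℝ (Fin d)) :
    reflect d x y (c • w) = c • reflect d x y w := by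
  unfold reflect
  split_ifs
  · rfl
  · rw [inner_smul_right, mul_left_comm, mul_smul, ← smul_sub c]

lemma norm_add_sub_add_reflect (x y w : EuclideanSpace ℝ (Fin d)) :
    ‖x + w - (y + reflect d x y w)‖ = |mirrorDist x y (x + w)| := by
  rcases eq_or_ne x y with rfl | hxy
  · simp [reflect, mirrorDist]
  have hr : ‖x - y‖ ≠ 0 := norm_ne_zero_iff.2 (sub_ne_zero.2 hxy)
  set e := ‖x - y‖⁻¹ • (x - y) with he
  have he_norm : ‖e‖ = 1 := norm_smul_inv_norm (𝕜 := ℝ) (sub_ne_zero.2 hxy)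
  have hsub : x - y = ‖x - y‖ • e := (smul_inv_smul₀ hr _).symm
  have hdisp : x + w - (y + reflect d x y w) = mirrorDist x y (x + w) • e := by
    rw [reflect, if_neg hxy, mirrorDist_add_left, ← he, add_smul, ← hsub]
    module
  rw [hdisp, norm_smul, he_norm, mul_one, Real.norm_eq_abs]

/-- The probability, given `X' = u`, that the uniform input `ζ` selects `Y' = X'` rather than the
reflection, for `‖u - x‖ < m` and `‖x - y‖ ≤ H`. -/
noncomputable def acceptProb (d : ℕ) (h m : ℝ) (x y u : EuclideanSpace ℝ (Fin d)) : ℝ :=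
  min (gaussDensityTrunc d h m y u) (gaussDensityTrunc d h m x u) / gaussDensityTrunc d h m x u

/-- The distance `‖X' - Y'‖` as a function of the first component `X' = u` and the uniform input
`ζ = t`, for `‖x - y‖ ≤ H`. -/
noncomputable def couplingDist (d : ℕ) (h m : ℝ) (x y u : EuclideanSpace ℝ (Fin d)) (t : ℝ) : ℝ :=
  if ‖u - x‖ < m then if t ≤ acceptProb d h m x y u then 0 else |mirrorDist x y u| else ‖x - y‖

lemma norm_sub_couplingY (hxy : ‖x - y‖ ≤ H) (h m : ℝ) (z : EuclideanSpace ℝ (Fin d)) (t : ℝ) :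
    ‖x + √h • z - couplingY d h m H x y z t‖ = couplingDist d h m x y (x + √h • z) t := by
  rw [couplingY, ← acceptProb, couplingDist, add_sub_cancel_left]
  simp only [hxy, and_true]
  split_ifs
  · rw [sub_self, norm_zero]
  · rw [← reflect_smul, norm_add_sub_add_reflect]
  · rw [add_sub_add_right_eq_sub]

lemma acceptProb_nonneg (hh : 0 < h) (m : ℝ) (x y u : EuclideanSpace ℝ (Fin d)) :
    0 ≤ acceptProb d h m x y u :=
  div_nonneg (le_min (gaussDensityTrunc_nonneg hh m y u) (gaussDensityTrunc_nonneg hh m x u))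
    (gaussDensityTrunc_nonneg hh m x u)

lemma acceptProb_le_one (hh : 0 < h) (m : ℝ) (x y u : EuclideanSpace ℝ (Fin d)) :
    acceptProb d h m x y u ≤ 1 :=
  div_le_one_of_le₀ (min_le_right _ _) (gaussDensityTrunc_nonneg hh m x u)

lemma measurable_acceptProb (h m : ℝ) (x y : EuclideanSpace ℝ (Fin d)) :
    Measurable (acceptProb d h m x y) :=
  ((measurable_gaussDensityTrunc h m y).min (measurable_gaussDensityTrunc h m x)).div
    (measurable_gaussDensityTrunc h m x)

lemma measurable_couplingDist (h m : ℝ) (x y : EuclideanSpace ℝ (Fin d)) :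
    Measurable fun p : EuclideanSpace ℝ (Fin d) × ℝ => couplingDist d h m x y p.1 p.2 := by
  have haccept : Measurable fun p : EuclideanSpace ℝ (Fin d) × ℝ => acceptProb d h m x y p.1 :=
    (measurable_acceptProb h m x y).comp measurable_fst
  have hmirror : Measurable fun p : EuclideanSpace ℝ (Fin d) × ℝ => mirrorDist x y p.1 :=
    (continuous_mirrorDist x y).measurable.comp measurable_fst
  exact Measurable.ite (measurableSet_lt (by fun_prop) measurable_const)
    (Measurable.ite (measurableSet_le measurable_snd haccept) measurable_const hmirror.abs)
    measurable_const

lemma norm_couplingDist_le (hm : 0 ≤ m) (h : ℝ) (x y u : EuclideanSpace ℝ (Fin d)) (t : ℝ) :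
    ‖couplingDist d h m x y u t‖ ≤ ‖x - y‖ + 2 * m := by
  unfold couplingDist
  split_ifs
  · rw [norm_zero]
    positivity
  · rw [norm_abs_eq_norm, Real.norm_eq_abs]
    linarith [abs_mirrorDist_le x y u]
  · rw [norm_norm]
    linarith

lemma integral_Icc_ite_le {ρ : ℝ} (hρ₀ : 0 ≤ ρ) (hρ₁ : ρ ≤ 1) (c : ℝ) :
    ∫ t in Set.Icc (0 : ℝ) 1, (if t ≤ ρ then 0 else c) = c * (1 - ρ) := by
  have hite : (fun t : ℝ => if t ≤ ρ then 0 else c) = (Set.Ioi ρ).indicator fun _ => c := by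
    ext t
    simp only [Set.indicator_apply, Set.mem_Ioi, ← not_le, ite_not]
  have hinter : Set.Icc (0 : ℝ) 1 ∩ Set.Ioi ρ = Set.Ioc ρ 1 := by
    ext t
    constructor
    · rintro ⟨⟨-, ht₁⟩, htρ⟩
      exact ⟨htρ, ht₁⟩
    · rintro ⟨htρ, ht₁⟩
      exact ⟨⟨hρ₀.trans htρ.le, ht₁⟩, htρ⟩
  rw [hite, setIntegral_indicator measurableSet_Ioi, hinter, setIntegral_const, smul_eq_mul,
    Real.volume_real_Ioc_of_le hρ₁, mul_comm]

lemma integral_Icc_couplingDist (hh : 0 < h) (m : ℝ) (x y u : EuclideanSpace ℝ (Fin d)) :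
    ∫ t in Set.Icc (0 : ℝ) 1, couplingDist d h m x y u t =
      if ‖u - x‖ < m then |mirrorDist x y u| * (1 - acceptProb d h m x y u) else ‖x - y‖ := by
  unfold couplingDist
  split_ifs
  · exact integral_Icc_ite_le (acceptProb_nonneg hh m x y u) (acceptProb_le_one hh m x y u) _
  · simp

lemma gaussDensity_mul_integral_couplingDist (hh : 0 < h) {u : EuclideanSpace ℝ (Fin d)}
    (hu : ‖u - x‖ ≠ m) (y : EuclideanSpace ℝ (Fin d)) :
    gaussDensity d h x u * ∫ t in Set.Icc (0 : ℝ) 1, couplingDist d h m x y u t =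
      |mirrorDist x y u| * (gaussDensityTrunc d h m x u -
        min (gaussDensityTrunc d h m y u) (gaussDensityTrunc d h m x u)) +
      ‖x - y‖ * (gaussDensity d h x u - gaussDensityTrunc d h m x u) := by
  rw [integral_Icc_couplingDist hh]
  rcases hu.lt_or_gt with hlt | hgt
  · have htrunc : gaussDensityTrunc d h m x u = gaussDensity d h x u := if_pos hlt.le
    have hpos := gaussDensity_pos hh x u
    rw [if_pos hlt, acceptProb, htrunc]
    field_simp
    ring
  · have htrunc : gaussDensityTrunc d h m x u = 0 := if_neg hgt.not_ge
    rw [if_neg hgt.not_gt, htrunc, min_eq_right (gaussDensityTrunc_nonneg hh m y u)]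
    ring

lemma integral_gaussianVec_couplingDist (hm : m ≠ 0) (x y : EuclideanSpace ℝ (Fin d)) {v : ℝ≥0}
    (hv : v ≠ 0) :
    ∫ u, (∫ t in Set.Icc (0 : ℝ) 1, couplingDist d v m x y u t) ∂gaussianVec d x v = ‖x - y‖ := by
  have hoff_sphere : ∀ᵐ u, ‖u - x‖ ≠ m := by
    simpa [ae_iff, Metric.sphere, dist_eq_norm] using Measure.addHaar_sphere_of_ne_zero volume x hm
  have hh : (0 : ℝ) < v := NNReal.coe_pos.2 hv.bot_lt
  have htail_int : Integrable fun u => gaussDensity d v x u - gaussDensityTrunc d v m x u :=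
    (integrable_gaussDensity x hv).sub (integrable_gaussDensityTrunc x hv m)
  rw [integral_gaussianVec x hv, integral_congr_ae (hoff_sphere.mono fun u hu =>
      gaussDensity_mul_integral_couplingDist hh hu y),
    integral_add (integrable_abs_mirrorDist_mul_gaussDensityTrunc x y hv m)
      (htail_int.const_mul _),
    integral_abs_mirrorDist_mul_gaussDensityTrunc x y hv, integral_const_mul,
    integral_sub (integrable_gaussDensity x hv) (integrable_gaussDensityTrunc x hv m),
    integral_gaussDensity x hv, ← mul_add, add_sub_cancel, mul_one]

lemma integral_prod_couplingDist (hm : 0 < m) (x y : EuclideanSpace ℝ (Fin d)) {v : ℝ≥0}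
    (hv : v ≠ 0) :
    ∫ p, couplingDist d v m x y p.1 p.2 ∂(gaussianVec d x v).prod (volume.restrict (Set.Icc 0 1)) =
      ‖x - y‖ := by
  have hint : Integrable (fun p : EuclideanSpace ℝ (Fin d) × ℝ => couplingDist d v m x y p.1 p.2)
      ((gaussianVec d x v).prod (volume.restrict (Set.Icc 0 1))) :=
    .of_bound (measurable_couplingDist v m x y).aestronglyMeasurable _
      (ae_of_all _ fun p => norm_couplingDist_le hm.le v x y p.1 p.2)
  rw [integral_prod _ hint, integral_gaussianVec_couplingDist hm.ne' x y hv]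

lemma map_add_sqrt_smul_prodMk {Ω : Type*} [MeasurableSpace Ω] {μ : Measure Ω} [IsFiniteMeasure μ]
    {Z : Ω → EuclideanSpace ℝ (Fin d)} {ζ : Ω → ℝ} (hZ : Measurable Z) (hζ : Measurable ζ)
    (hZlaw : μ.map Z = stdGaussian d) (hindep : IndepFun Z ζ μ) (x : EuclideanSpace ℝ (Fin d))
    (v : ℝ≥0) :
    μ.map (fun ω => (x + √(v : ℝ) • Z ω, ζ ω)) = (gaussianVec d x v).prod (μ.map ζ) := by
  have hshift : Measurable fun z : EuclideanSpace ℝ (Fin d) => x + √(v : ℝ) • z := by fun_prop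
  have hindep' : IndepFun (fun ω => x + √(v : ℝ) • Z ω) ζ μ := hindep.comp hshift measurable_id
  rw [(indepFun_iff_map_prod_eq_prod_map_map (by fun_prop) hζ.aemeasurable).1 hindep',
    ← stdGaussian_map_add_sqrt_smul, ← hZlaw, Measure.map_map hshift hZ]
  rfl

end CouplingDistance

/-- **Lemma (the coupling preserves the first moment of the distance).**
For `(X', Y')` given by the coupling construction from the points `x̂, ŷ`:
`𝔼‖X' - Y'‖ = ‖x̂ - ŷ‖`. -/
theorem couplingY_first_moment
    {d : ℕ} (hd : 1 ≤ d) (h m H : ℝ) (hh : 0 < h) (hm : 0 < m) (hH : 0 < H)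
    (xh yh : EuclideanSpace ℝ (Fin d))
    {Ω : Type*} [MeasureSpace Ω] [IsProbabilityMeasure (ℙ : Measure Ω)]
    (Z : Ω → EuclideanSpace ℝ (Fin d)) (ζ : Ω → ℝ)
    (hZmeas : Measurable Z) (hζmeas : Measurable ζ)
    (hZlaw : Measure.map Z ℙ = stdGaussian d)
    (hζlaw : Measure.map ζ ℙ = volume.restrict (Set.Icc (0:ℝ) 1))
    (hindep : IndepFun Z ζ ℙ) :
    ∫ ω, ‖(xh + Real.sqrt h • Z ω) - couplingY d h m H xh yh (Z ω) (ζ ω)‖ ∂ℙ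
      = ‖xh - yh‖ := by
  by_cases hxy : ‖xh - yh‖ ≤ H
  · lift h to NNReal using hh.le
    have hv : h ≠ 0 := (NNReal.coe_pos.1 hh).ne'
    have hXmeas : Measurable fun ω => (xh + √(h : ℝ) • Z ω, ζ ω) := by fun_prop
    calc ∫ ω, ‖xh + √(h : ℝ) • Z ω - couplingY d h m H xh yh (Z ω) (ζ ω)‖
        = ∫ ω, couplingDist d h m xh yh (xh + √(h : ℝ) • Z ω) (ζ ω) := by
          simp only [norm_sub_couplingY hxy]
      _ = ∫ p, couplingDist d h m xh yh p.1 p.2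
            ∂(gaussianVec d xh h).prod (volume.restrict (Set.Icc 0 1)) := by
          rw [← hζlaw, ← map_add_sqrt_smul_prodMk hZmeas hζmeas hZlaw hindep,
            integral_map hXmeas.aemeasurable
              (measurable_couplingDist h m xh yh).aestronglyMeasurable]
      _ = ‖xh - yh‖ := integral_prod_couplingDist hm xh yh hv
  · simp [couplingY, hxy]
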